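/- For every n ∈ ℕ with n ≤ N, every f ∈ C^2_c(ℝ^d), all t < s and x ∈ ℝ^d, one has ∫_{ℝ^d} Γ_0^{(z̄)}(t,x;s,ξ) ((K_n - K_{n-1})f)(s,ξ) dξ = G_n(t,s,x) ∫_{ℝ^d} Γ_0^{(z̄)}(t,x;s,ξ) f(ξ) dξ, where on the left (K_n - K_{n-1})f is computed by letting the differential part of K_n - K_{n-1} act on f(ξ) (only spatial derivatives of f enter, since f does not depend on time). -/

import Mathlib

/-!
Put `τ = s - t`, `E = e^{τB}`, `C = C(τ)`, and for a continuous compactly supported `g` write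
`u_g(x) = ∫ Γ₀(t,x;s,ξ) g(ξ) dξ`. The kernel is `φ(ξ - Ex)` with the Gaussian profile
`φ(z) = c · exp(-⟨C⁻¹z, z⟩ / 2)`, so differentiating under the integral gives
`∇u_g = Eᵀ V` with `V(x) = ∫ φ(ξ - Ex) C⁻¹(ξ - Ex) g(ξ) dξ` (`pdx_gavg`; symmetry of `C` is used
here). Two intertwining relations follow.

* Since `E M̄ Eᵀ = C`, one gets `M_i u_g = (Ex)_i u_g + (C V)_i = u_{ξ_i g}` (`MopShift_gavg`).
  Iterating, a polynomial in the `M_i` applied to `u_g` is `u` of that polynomial times `g`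
  (`MshiftPow_gavg`, `TpolyOp_gavg`).
* Since `e^{-τBᵀ} Eᵀ = 1`, one gets `W_i u_g = V_i`, and integration by parts in `ξ` identifies
  `V_i` with `u_{∂_i g}` (`Wop_gavg`).

Applying the second relation once or twice to `f` and then the first to the Taylor polynomials
turns every summand of `G_n u_f` into the corresponding summand of `u_{(K_n - K_{n-1}) f}`.
All functions averaged have compact support, so smoothness of the kernel in `x` and `ξ` is enough
for the analytic steps. For singular `C` the normalizing factor `|det C|^{-1/2}` takes the value
`0`, the kernel vanishes identically, and the first relation still holds, as `0 = 0`.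
-/

open MeasureTheory Matrix Finset

noncomputable section

/-- Index set for `ℝ^d` split into groups of sizes `p 0, …, p r`:
the element `⟨i, a⟩` is the `a`-th coordinate of the `i`-th group. -/
abbrev Idx (r : ℕ) (p : Fin (r + 1) → ℕ) : Type := (i : Fin (r + 1)) × Fin (p i)

variable {r : ℕ} {p : Fin (r + 1) → ℕ}

/-- The dilation exponent `σ_j = 2i+1` for a coordinate `j` in group `i`. -/
def sigmaWt (j : Idx r p) : ℕ := 2 * (j.1 : ℕ) + 1

/-- The `B`-length `|β|_B = Σ_j σ_j β_j` of a multi-index `β`. -/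
def bwt (β : Idx r p → ℕ) : ℕ := ∑ j, sigmaWt j * β j

/-- The homogeneous norm `[x]_B = Σ_j |x_j|^{1/σ_j}`. -/
def hnorm (x : Idx r p → ℝ) : ℝ := ∑ j, |x j| ^ (1 / (sigmaWt j : ℝ))

/-- Structural assumption on the matrix `B`: the group sizes are decreasing and positive,
the only nonzero blocks are the subdiagonal ones `B_1, …, B_r`, and the block `B_i`
(of size `p i × p (i-1)`) has full rank `p i`. -/
structure IsKolB (B : Matrix (Idx r p) (Idx r p) ℝ) : Prop where
  anti : Antitone p
  ppos : ∀ i, 1 ≤ p i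
  sparse : ∀ j k : Idx r p, (j.1 : ℕ) ≠ (k.1 : ℕ) + 1 → B j k = 0
  rk : ∀ i k : Fin (r + 1), (i : ℕ) = (k : ℕ) + 1 →
    (Matrix.of fun (a : Fin (p i)) (b : Fin (p k)) => B ⟨i, a⟩ ⟨k, b⟩).rank = p i

/-- Matrix exponential `e^M = Σ_n M^n / n!` (defined entrywise). -/
def mexp (M : Matrix (Idx r p) (Idx r p) ℝ) : Matrix (Idx r p) (Idx r p) ℝ :=
  Matrix.of fun i j => ∑' n : ℕ, ((n.factorial : ℝ)⁻¹ • M ^ n) i j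

/-- The `d×d` matrix whose top-left `p 0 × p 0` block is `A₀` and whose other entries vanish. -/
def embed0 (A₀ : Matrix (Fin (p 0)) (Fin (p 0)) ℝ) : Matrix (Idx r p) (Idx r p) ℝ :=
  Matrix.of fun j k =>
    if h : j.1 = 0 ∧ k.1 = 0 then
      A₀ (Fin.cast (congrArg p h.1) j.2) (Fin.cast (congrArg p h.2) k.2)
    else 0

/-- The covariance matrix `C(t) = ∫_0^t e^{sB} A e^{sBᵀ} ds`. -/
def covMat (B A : Matrix (Idx r p) (Idx r p) ℝ) (t : ℝ) :
    Matrix (Idx r p) (Idx r p) ℝ :=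
  Matrix.of fun j k => ∫ s in (0:ℝ)..t, (mexp (s • B) * A * (mexp (s • B))ᵀ) j k

/-- The Gaussian kernel
`Γ₀(t,x;s,y) = (2π)^{-d/2} |det C(s-t)|^{-1/2} exp(-⟨C(s-t)⁻¹(y-e^{(s-t)B}x), y-e^{(s-t)B}x⟩/2)`. -/
def gauss (B A : Matrix (Idx r p) (Idx r p) ℝ)
    (t : ℝ) (x : Idx r p → ℝ) (s : ℝ) (y : Idx r p → ℝ) : ℝ :=
  (2 * Real.pi) ^ (-(Fintype.card (Idx r p) : ℝ) / 2) *
    |(covMat B A (s - t)).det| ^ (-(1:ℝ) / 2) *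
    Real.exp (-(1/2) *
      ((covMat B A (s - t))⁻¹ *ᵥ (y - mexp ((s - t) • B) *ᵥ x)) ⬝ᵥ
        (y - mexp ((s - t) • B) *ᵥ x))

/-- Partial derivative `∂_{x_i}`. -/
def pdx (i : Idx r p) (f : (Idx r p → ℝ) → ℝ) : (Idx r p → ℝ) → ℝ :=
  fun x => fderiv ℝ f x (Pi.single i 1)

/-- Iterated partial derivative `D^β = ∂_{x_1}^{β_1} ⋯ ∂_{x_d}^{β_d}`. -/
def Dx (β : Idx r p → ℕ) (f : (Idx r p → ℝ) → ℝ) : (Idx r p → ℝ) → ℝ :=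
  (Finset.univ (α := Idx r p)).toList.foldr (fun i g => (pdx i)^[β i] g) f

/-- The indices of the first group (coordinates `1, …, p_0`). -/
def G0set (r : ℕ) (p : Fin (r + 1) → ℕ) : Finset (Idx r p) :=
  Finset.univ.filter fun i => (i.1 : ℕ) = 0

/-- A vector supported in the coordinates of the first group. -/
def suppG0 (ξ : Idx r p → ℝ) : Prop := ∀ i : Idx r p, (i.1 : ℕ) ≠ 0 → ξ i = 0

/-- The vector field `Y f(t,x) = ⟨Bx, ∇_x f⟩ + ∂_t f`. -/
def Yop (B : Matrix (Idx r p) (Idx r p) ℝ)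
    (f : ℝ → (Idx r p → ℝ) → ℝ) : ℝ → (Idx r p → ℝ) → ℝ :=
  fun t x => (∑ j, (B *ᵥ x) j * pdx j (f t) x) + deriv (fun τ => f τ x) t

/-- The derivative `Y^k ∂_x^β f`. -/
def YDx (B : Matrix (Idx r p) (Idx r p) ℝ) (k : ℕ) (β : Idx r p → ℕ)
    (f : ℝ → (Idx r p → ℝ) → ℝ) : ℝ → (Idx r p → ℝ) → ℝ :=
  (Yop B)^[k] (fun t => Dx β (f t))

/-- The multi-index factorial `β! = Π_j (β_j)!`. -/
def mfact (β : Idx r p → ℕ) : ℕ := ∏ j, (β j).factorial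

/-- The `n`-th order intrinsic Taylor polynomial of `a` centered at `z̄ = (tb, xb)`:
`T_n(a,z̄)(t,x) = Σ_{2k+|β|_B ≤ n} (1/(k!β!)) (Y^k ∂^β a)(z̄) (t-tb)^k (x-e^{(t-tb)B}xb)^β`,
with `T_n ≡ 0` for `n < 0`. -/
def Tpoly (B : Matrix (Idx r p) (Idx r p) ℝ) (a : ℝ → (Idx r p → ℝ) → ℝ)
    (tb : ℝ) (xb : Idx r p → ℝ) (n : ℤ) : ℝ → (Idx r p → ℝ) → ℝ :=
  fun t x =>
    ∑ k ∈ Finset.range (n.toNat + 1),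
      ∑ β ∈ Fintype.piFinset (fun _ : Idx r p => Finset.range (n.toNat + 1)),
        if 2 * (k : ℤ) + (bwt β : ℤ) ≤ n then
          ((k.factorial * mfact β : ℕ) : ℝ)⁻¹ * YDx B k β a tb xb * (t - tb) ^ k *
            ∏ j, (x j - (mexp ((t - tb) • B) *ᵥ xb) j) ^ β j
        else 0

/-- `M̄(t) = e^{-tB} C(t) e^{-tBᵀ}`. -/
def Mbar (B A : Matrix (Idx r p) (Idx r p) ℝ) (t : ℝ) : Matrix (Idx r p) (Idx r p) ℝ :=
  mexp (-(t • B)) * covMat B A t * (mexp (-(t • B)))ᵀ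

/-- The first order operator `M_i(t,x) f = (e^{tB}x)_i f + (e^{tB} M̄(t) ∇_x f)_i`. -/
def Mop (B A : Matrix (Idx r p) (Idx r p) ℝ) (τ : ℝ) (i : Idx r p)
    (f : (Idx r p → ℝ) → ℝ) : (Idx r p → ℝ) → ℝ :=
  fun x => (mexp (τ • B) *ᵥ x) i * f x + ((mexp (τ • B) * Mbar B A τ) *ᵥ fun j => pdx j f x) i

/-- The composition `M^β = M_1^{β_1} ∘ ⋯ ∘ M_d^{β_d}`. -/
def Mpow (B A : Matrix (Idx r p) (Idx r p) ℝ) (τ : ℝ) (β : Idx r p → ℕ)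
    (f : (Idx r p → ℝ) → ℝ) : (Idx r p → ℝ) → ℝ :=
  (Finset.univ (α := Idx r p)).toList.foldr (fun i g => (Mop B A τ i)^[β i] g) f

/-- The shifted operator `(M_i(τ,x) - c) f`. -/
def MopShift (B A : Matrix (Idx r p) (Idx r p) ℝ) (τ : ℝ) (c : ℝ) (i : Idx r p)
    (f : (Idx r p → ℝ) → ℝ) : (Idx r p → ℝ) → ℝ :=
  fun x => Mop B A τ i f x - c * f x

/-- The composition `(M(τ,x) - c)^β` of shifted operators. -/
def MshiftPow (B A : Matrix (Idx r p) (Idx r p) ℝ) (τ : ℝ) (c : Idx r p → ℝ)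
    (β : Idx r p → ℕ) (f : (Idx r p → ℝ) → ℝ) : (Idx r p → ℝ) → ℝ :=
  (Finset.univ (α := Idx r p)).toList.foldr (fun i g => (MopShift B A τ (c i) i)^[β i] g) f

/-- The operator `W_i(τ) f = (e^{-τBᵀ} ∇_x f)_i`. -/
def Wop (B : Matrix (Idx r p) (Idx r p) ℝ) (τ : ℝ) (i : Idx r p)
    (f : (Idx r p → ℝ) → ℝ) : (Idx r p → ℝ) → ℝ :=
  fun x => (mexp (-(τ • Bᵀ)) *ᵥ fun j => pdx j f x) i

/-- The composition `W^β(τ) = W_1^{β_1}(τ) ∘ ⋯ ∘ W_d^{β_d}(τ)`. -/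
def Wpow (B : Matrix (Idx r p) (Idx r p) ℝ) (τ : ℝ) (β : Idx r p → ℕ)
    (f : (Idx r p → ℝ) → ℝ) : (Idx r p → ℝ) → ℝ :=
  (Finset.univ (α := Idx r p)).toList.foldr (fun i g => (Wop B τ i)^[β i] g) f

/-- The Taylor polynomial `T_n(a,z̄)(s,·)` with the commuting operators `M_i(τ,x)` substituted
for the spatial arguments. -/
def TpolyOp (B A : Matrix (Idx r p) (Idx r p) ℝ) (a : ℝ → (Idx r p → ℝ) → ℝ)
    (tb : ℝ) (xb : Idx r p → ℝ) (n : ℤ) (s τ : ℝ)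
    (f : (Idx r p → ℝ) → ℝ) : (Idx r p → ℝ) → ℝ :=
  fun x =>
    ∑ k ∈ Finset.range (n.toNat + 1),
      ∑ β ∈ Fintype.piFinset (fun _ : Idx r p => Finset.range (n.toNat + 1)),
        if 2 * (k : ℤ) + (bwt β : ℤ) ≤ n then
          ((k.factorial * mfact β : ℕ) : ℝ)⁻¹ * YDx B k β a tb xb * (s - tb) ^ k *
            MshiftPow B A τ (mexp ((s - tb) • B) *ᵥ xb) β f x
        else 0

/-- The operator `G_n(t,s,x)` of the expansion. -/
def Gop (B A : Matrix (Idx r p) (Idx r p) ℝ)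
    (a : Idx r p → Idx r p → ℝ → (Idx r p → ℝ) → ℝ)
    (aD : Idx r p → ℝ → (Idx r p → ℝ) → ℝ) (tb : ℝ) (xb : Idx r p → ℝ)
    (n : ℤ) (t s : ℝ) (f : (Idx r p → ℝ) → ℝ) : (Idx r p → ℝ) → ℝ :=
  fun x =>
    (1/2) * ∑ i ∈ G0set r p, ∑ j ∈ G0set r p,
        (TpolyOp B A (a i j) tb xb n s (s - t) (Wop B (s - t) i (Wop B (s - t) j f)) x
          - TpolyOp B A (a i j) tb xb (n - 1) s (s - t) (Wop B (s - t) i (Wop B (s - t) j f)) x)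
      + ∑ i ∈ G0set r p,
        (TpolyOp B A (aD i) tb xb (n - 1) s (s - t) (Wop B (s - t) i f) x
          - TpolyOp B A (aD i) tb xb (n - 2) s (s - t) (Wop B (s - t) i f) x)

/-- `((K_n - K_{n-1}) g)(s,ξ)` for a purely spatial function `g`. -/
def Kdiff (B : Matrix (Idx r p) (Idx r p) ℝ)
    (a : Idx r p → Idx r p → ℝ → (Idx r p → ℝ) → ℝ)
    (aD : Idx r p → ℝ → (Idx r p → ℝ) → ℝ) (tb : ℝ) (xb : Idx r p → ℝ)
    (n : ℤ) (g : (Idx r p → ℝ) → ℝ) (s : ℝ) (ξ : Idx r p → ℝ) : ℝ :=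
  (1/2) * ∑ i ∈ G0set r p, ∑ j ∈ G0set r p,
      (Tpoly B (a i j) tb xb n s ξ - Tpoly B (a i j) tb xb (n - 1) s ξ) * pdx i (pdx j g) ξ
    + ∑ i ∈ G0set r p, (Tpoly B (aD i) tb xb (n - 1) s ξ - Tpoly B (aD i) tb xb (n - 2) s ξ) *
        pdx i g ξ

/-- The matrix `A(z̄)` with top-left block `(a_{ij}(z̄))` and zeros elsewhere. -/
def AzMat (a : Idx r p → Idx r p → ℝ → (Idx r p → ℝ) → ℝ) (tb : ℝ) (xb : Idx r p → ℝ) :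
    Matrix (Idx r p) (Idx r p) ℝ :=
  Matrix.of fun i j => if (i.1 : ℕ) = 0 ∧ (j.1 : ℕ) = 0 then a i j tb xb else 0

/-- `u₀(t,x) = ∫ Γ₀(t,x;T,y) φ(y) dy`. -/
def u0fn (B A : Matrix (Idx r p) (Idx r p) ℝ) (T : ℝ) (φ : (Idx r p → ℝ) → ℝ)
    (t : ℝ) (x : Idx r p → ℝ) : ℝ :=
  ∫ y : Idx r p → ℝ, gauss B A t x T y * φ y

/-- The Duhamel recursion: `u_0 = ∫ Γ₀ φ` and
`u_n(t,x) = ∫_t^T ∫ Γ₀(t,x;s,ξ) Σ_{h=1}^n ((K_h - K_{h-1}) u_{n-h})(s,ξ) dξ ds`. -/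
def useq (B : Matrix (Idx r p) (Idx r p) ℝ)
    (a : Idx r p → Idx r p → ℝ → (Idx r p → ℝ) → ℝ)
    (aD : Idx r p → ℝ → (Idx r p → ℝ) → ℝ) (tb : ℝ) (xb : Idx r p → ℝ)
    (T : ℝ) (φ : (Idx r p → ℝ) → ℝ) : ℕ → ℝ → (Idx r p → ℝ) → ℝ
  | 0 => u0fn B (AzMat a tb xb) T φ
  | n + 1 => fun t x =>
      ∫ s in t..T, ∫ ξ : Idx r p → ℝ, gauss B (AzMat a tb xb) t x s ξ *
        ∑ h ∈ Finset.range (n + 1),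
          Kdiff B a aD tb xb ((h : ℤ) + 1) (useq B a aD tb xb T φ (n - h) s) s ξ
  termination_by n => n
  decreasing_by omega

/-- Nested integral of a composition of operators `G_{i_1}(t,s_1) ⋯ G_{i_h}(t,s_h)` applied
to `u`, over the simplex `lo ≤ s_1 ≤ ⋯ ≤ s_h ≤ T`. -/
def Lrec (B A : Matrix (Idx r p) (Idx r p) ℝ)
    (a : Idx r p → Idx r p → ℝ → (Idx r p → ℝ) → ℝ)
    (aD : Idx r p → ℝ → (Idx r p → ℝ) → ℝ) (tb : ℝ) (xb : Idx r p → ℝ)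
    (t T : ℝ) (u : (Idx r p → ℝ) → ℝ) : List ℕ → ℝ → (Idx r p → ℝ) → ℝ
  | [] => fun _ => u
  | m :: ms => fun lo x =>
      ∫ s in lo..T, Gop B A a aD tb xb (m : ℤ) t s (Lrec B A a aD tb xb t T u ms s) x

/-- The operator `L_n(t,T,x) = Σ_{h=1}^n ∫_t^T ds_1 ⋯ ∫_{s_{h-1}}^T ds_h
Σ_{i_1+⋯+i_h=n, i_j ≥ 1} G_{i_1}(t,s_1) ⋯ G_{i_h}(t,s_h)`. -/
def Lop (B A : Matrix (Idx r p) (Idx r p) ℝ)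
    (a : Idx r p → Idx r p → ℝ → (Idx r p → ℝ) → ℝ)
    (aD : Idx r p → ℝ → (Idx r p → ℝ) → ℝ) (tb : ℝ) (xb : Idx r p → ℝ)
    (n : ℕ) (t T : ℝ) (u : (Idx r p → ℝ) → ℝ) : (Idx r p → ℝ) → ℝ :=
  fun x => ∑ h ∈ Finset.Icc 1 n,
    ∑ iv ∈ (Fintype.piFinset fun _ : Fin h => Finset.Icc 1 n).filter (fun iv => ∑ j, iv j = n),
      Lrec B A a aD tb xb t T u (List.ofFn iv) t x

/-- The dilation matrix `D₀(λ) = diag(λ^{σ_1}, …, λ^{σ_d})`. -/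
def D0mat (r : ℕ) (p : Fin (r + 1) → ℕ) (lam : ℝ) : Matrix (Idx r p) (Idx r p) ℝ :=
  Matrix.diagonal fun j => lam ^ sigmaWt j

/-- The index set `J_n` of Lemma A.8. -/
def Jset (r : ℕ) (p : Fin (r + 1) → ℕ) (n : ℕ) :
    Finset ((Idx r p → ℕ) × (Idx r p → ℕ)) :=
  ((Fintype.piFinset fun _ : Idx r p => Finset.range (3 * n + 1)) ×ˢ
    (Fintype.piFinset fun _ : Idx r p => Finset.range (n + 1))).filter
    fun q => 1 ≤ ∑ j, q.1 j ∧ ∑ j, q.1 j ≤ 3 * n ∧ bwt q.2 ≤ n ∧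
      0 ≤ (bwt q.1 : ℤ) - (bwt q.2 : ℤ) + (n : ℤ)

/-- The index set of pairs `(δ, α)` with `|δ| + |α| ≤ |β|` and `|δ|_B - |α|_B ≤ |β|_B`. -/
def Sset (β : Idx r p → ℕ) : Finset ((Idx r p → ℕ) × (Idx r p → ℕ)) :=
  ((Fintype.piFinset fun _ : Idx r p => Finset.range (∑ j, β j + 1)) ×ˢ
    (Fintype.piFinset fun _ : Idx r p => Finset.range (∑ j, β j + 1))).filter
    fun q => (∑ j, q.1 j) + (∑ j, q.2 j) ≤ ∑ j, β j ∧
      (bwt q.1 : ℤ) - (bwt q.2 : ℤ) ≤ (bwt β : ℤ)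

/-- The index set of multi-indices `α` with `|α| = |β|` and `|α|_B ≥ |β|_B`. -/
def Wset (β : Idx r p → ℕ) : Finset (Idx r p → ℕ) :=
  (Fintype.piFinset fun _ : Idx r p => Finset.range (∑ j, β j + 1)).filter
    fun α => ∑ j, α j = ∑ j, β j ∧ bwt β ≤ bwt α

/-! ### Matrix exponential and covariance -/

theorem mexp_eq_exp (M : Matrix (Idx r p) (Idx r p) ℝ) : mexp M = NormedSpace.exp M := by
  open scoped Matrix.Norms.Operator in
  have h := NormedSpace.exp_series_hasSum_exp' (𝕂 := ℝ) M
  ext i j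
  exact (Pi.hasSum.1 (Pi.hasSum.1 h i) j).tsum_eq

theorem mexp_neg_mul (M : Matrix (Idx r p) (Idx r p) ℝ) : mexp (-M) * mexp M = 1 := by
  rw [mexp_eq_exp, mexp_eq_exp, Matrix.exp_neg]
  exact Matrix.nonsing_inv_mul _ ((Matrix.isUnit_iff_isUnit_det _).1 (Matrix.isUnit_exp M))

theorem mexp_transpose (M : Matrix (Idx r p) (Idx r p) ℝ) : mexp Mᵀ = (mexp M)ᵀ := by
  rw [mexp_eq_exp, mexp_eq_exp, Matrix.exp_transpose]

theorem covMat_symm (B A : Matrix (Idx r p) (Idx r p) ℝ) (hA : Aᵀ = A) (t : ℝ) :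
    (covMat B A t)ᵀ = covMat B A t := by
  ext j k
  simp only [covMat, Matrix.transpose_apply, Matrix.of_apply]
  congr 1
  ext s
  rw [← Matrix.transpose_apply (_ * _ * _)]
  simp only [Matrix.transpose_mul, Matrix.transpose_transpose, hA, Matrix.mul_assoc]

/-! ### Gaussian averages and their gradients -/

/-- The Gaussian profile `z ↦ c · exp(-⟨Pz, z⟩ / 2)`. -/
def gprof (c : ℝ) (P : Matrix (Idx r p) (Idx r p) ℝ) (z : Idx r p → ℝ) : ℝ :=
  c * Real.exp (-(1/2) * (P *ᵥ z) ⬝ᵥ z)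

theorem gprof_contDiff (c : ℝ) (P : Matrix (Idx r p) (Idx r p) ℝ) :
    ContDiff ℝ 2 (gprof c P) := by
  unfold gprof
  simp only [Matrix.mulVec, dotProduct]
  fun_prop

/-- The derivative of the profile in the direction `v` is `-φ(z) ⟨Pz, v⟩`, computed along the line
`ρ ↦ z + ρ v`, on which the exponent is a quadratic polynomial in `ρ`. -/
theorem gprof_fderiv (c : ℝ) (P : Matrix (Idx r p) (Idx r p) ℝ) (hP : Pᵀ = P)
    (z v : Idx r p → ℝ) :
    fderiv ℝ (gprof c P) z v = -(gprof c P z * (P *ᵥ z) ⬝ᵥ v) := by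
  have hd : DifferentiableAt ℝ (gprof c P) z :=
    (gprof_contDiff c P).differentiable (by norm_num) z
  rw [← hd.lineDeriv_eq_fderiv]
  have hs : (P *ᵥ v) ⬝ᵥ z = (P *ᵥ z) ⬝ᵥ v := by
    rw [dotProduct_comm, Matrix.dotProduct_mulVec, ← Matrix.mulVec_transpose, hP]
  have hq : ∀ ρ : ℝ, (P *ᵥ (z + ρ • v)) ⬝ᵥ (z + ρ • v) =
      (P *ᵥ z) ⬝ᵥ z + 2 * ((P *ᵥ z) ⬝ᵥ v) * ρ + ((P *ᵥ v) ⬝ᵥ v) * ρ ^ 2 := by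
    intro ρ
    simp only [Matrix.mulVec_add, Matrix.mulVec_smul, add_dotProduct, dotProduct_add,
      smul_dotProduct, dotProduct_smul, smul_eq_mul, hs]
    ring
  have h1 : HasDerivAt (fun ρ : ℝ => -(1/2) * ((P *ᵥ z) ⬝ᵥ z + 2 * ((P *ᵥ z) ⬝ᵥ v) * ρ
      + ((P *ᵥ v) ⬝ᵥ v) * ρ ^ 2)) (-(1/2) * (2 * ((P *ᵥ z) ⬝ᵥ v))) 0 := by
    have h2 := (((hasDerivAt_id (0:ℝ)).const_mul (2 * ((P *ᵥ z) ⬝ᵥ v))).const_add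
      ((P *ᵥ z) ⬝ᵥ z)).add (((hasDerivAt_id (0:ℝ)).pow 2).const_mul ((P *ᵥ v) ⬝ᵥ v))
    simpa using h2.const_mul (-(1/2) : ℝ)
  have h3 := (h1.exp).const_mul c
  have h4 : HasLineDerivAt ℝ (gprof c P) (-(gprof c P z * (P *ᵥ z) ⬝ᵥ v)) z v := by
    unfold HasLineDerivAt
    simp only [gprof, hq]
    refine h3.congr_deriv ?_
    rw [mul_zero, add_zero, zero_pow two_ne_zero, mul_zero, add_zero]
    ring
  exact h4.lineDeriv

/-- The Gaussian average `x ↦ ∫ φ(ξ - Ex) g(ξ) dξ` with profile `φ = gprof c P`. -/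
def gavg (c : ℝ) (P E : Matrix (Idx r p) (Idx r p) ℝ) (g : (Idx r p → ℝ) → ℝ)
    (x : Idx r p → ℝ) : ℝ :=
  ∫ ξ : Idx r p → ℝ, gprof c P (ξ - E *ᵥ x) * g ξ

theorem gprof_shift_continuous (c : ℝ) (P E : Matrix (Idx r p) (Idx r p) ℝ)
    (x : Idx r p → ℝ) : Continuous fun ξ : Idx r p → ℝ => gprof c P (ξ - E *ᵥ x) :=
  (gprof_contDiff c P).continuous.comp (by fun_prop)

theorem gavg_integrable (c : ℝ) (P E : Matrix (Idx r p) (Idx r p) ℝ)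
    {g : (Idx r p → ℝ) → ℝ} (hg : Continuous g) (hgc : HasCompactSupport g)
    (x : Idx r p → ℝ) :
    Integrable fun ξ : Idx r p → ℝ => gprof c P (ξ - E *ᵥ x) * g ξ :=
  ((gprof_shift_continuous c P E x).mul hg).integrable_of_hasCompactSupport hgc.mul_left

theorem gavg_sum (c : ℝ) (P E : Matrix (Idx r p) (Idx r p) ℝ) {ι : Type*} (S : Finset ι)
    {g : ι → (Idx r p → ℝ) → ℝ} (hg : ∀ i ∈ S, Continuous (g i))
    (hgc : ∀ i ∈ S, HasCompactSupport (g i)) (k : ι → ℝ) (x : Idx r p → ℝ) :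
    ∑ i ∈ S, k i * gavg c P E (g i) x = gavg c P E (fun ξ => ∑ i ∈ S, k i * g i ξ) x := by
  unfold gavg
  simp_rw [← integral_const_mul]
  rw [← integral_finsetSum _ fun i hi =>
    (gavg_integrable c P E (hg i hi) (hgc i hi) x).const_mul (k i)]
  congr 1
  ext ξ
  rw [Finset.mul_sum]
  exact Finset.sum_congr rfl fun i _ => by ring

/-- Differentiation under the integral sign; the compact support of `g` and the continuity of the
derivative of the profile give the dominating function `K * |g|` near `x`. -/
theorem gavg_hasFDerivAt (c : ℝ) (P E : Matrix (Idx r p) (Idx r p) ℝ)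
    {g : (Idx r p → ℝ) → ℝ} (hg : Continuous g) (hgc : HasCompactSupport g)
    (x : Idx r p → ℝ) :
    HasFDerivAt (gavg c P E g)
      (∫ ξ, g ξ • ((fderiv ℝ (gprof c P) (ξ - E *ᵥ x)).comp
        (-(LinearMap.toContinuousLinearMap E.mulVecLin)))) x := by
  set L : (Idx r p → ℝ) →L[ℝ] (Idx r p → ℝ) := -(LinearMap.toContinuousLinearMap E.mulVecLin)
    with hL
  let D : (Idx r p → ℝ) × (Idx r p → ℝ) → ((Idx r p → ℝ) →L[ℝ] ℝ) :=
    fun q => (fderiv ℝ (gprof c P) (q.2 - E *ᵥ q.1)).comp L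
  have hDc : Continuous D := by
    have h1 : Continuous (fderiv ℝ (gprof c P)) :=
      (gprof_contDiff c P).continuous_fderiv (by norm_num)
    have h2 : Continuous fun q : (Idx r p → ℝ) × (Idx r p → ℝ) => q.2 - E *ᵥ q.1 := by
      fun_prop
    exact (h1.comp h2).clm_comp continuous_const
  obtain ⟨K, hK⟩ := ((isCompact_closedBall x 1).prod hgc.isCompact).exists_bound_of_continuousOn
    hDc.continuousOn
  refine hasFDerivAt_integral_of_dominated_of_fderiv_le
    (F' := fun y ξ => g ξ • D (y, ξ)) (bound := fun ξ => K * ‖g ξ‖)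
    (Metric.closedBall_mem_nhds x one_pos) ?_ (gavg_integrable c P E hg hgc x) ?_ ?_ ?_ ?_
  · exact Filter.Eventually.of_forall fun y =>
      ((gprof_shift_continuous c P E y).mul hg).aestronglyMeasurable
  · exact (hg.smul (hDc.comp (by fun_prop))).aestronglyMeasurable
  · refine Filter.Eventually.of_forall fun ξ y hy => ?_
    by_cases hξ : ξ ∈ tsupport g
    · rw [norm_smul, mul_comm]
      exact mul_le_mul_of_nonneg_right (hK (y, ξ) ⟨hy, hξ⟩) (norm_nonneg _)
    · simp [image_eq_zero_of_notMem_tsupport hξ]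
  · exact (hg.norm.integrable_of_hasCompactSupport hgc.norm).const_mul K
  · refine Filter.Eventually.of_forall fun ξ y _ => ?_
    have h1 : HasFDerivAt (gprof c P) (fderiv ℝ (gprof c P) (ξ - E *ᵥ y)) (ξ - E *ᵥ y) :=
      ((gprof_contDiff c P).differentiable (by norm_num) _).hasFDerivAt
    have h2 : HasFDerivAt (fun y : Idx r p → ℝ => ξ - E *ᵥ y) L y :=
      (LinearMap.toContinuousLinearMap E.mulVecLin).hasFDerivAt.const_sub ξ
    exact (h1.comp y h2).mul_const (g ξ)

/-- The gradient of a Gaussian average, `∇u = Eᵀ V` with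
`V_l = ∫ φ(ξ - Ex) (P(ξ - Ex))_l g(ξ) dξ`. -/
theorem pdx_gavg (c : ℝ) (P E : Matrix (Idx r p) (Idx r p) ℝ) (hP : Pᵀ = P)
    {g : (Idx r p → ℝ) → ℝ} (hg : Continuous g) (hgc : HasCompactSupport g)
    (x : Idx r p → ℝ) :
    (fun j => pdx j (gavg c P E g) x) =
      Eᵀ *ᵥ fun l => gavg c P E (fun ξ => (P *ᵥ (ξ - E *ᵥ x)) l * g ξ) x := by
  ext j
  have hpc : ∀ l, Continuous fun ξ : Idx r p → ℝ => (P *ᵥ (ξ - E *ᵥ x)) l * g ξ := by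
    intro l
    have : Continuous fun ξ : Idx r p → ℝ => P *ᵥ (ξ - E *ᵥ x) := by fun_prop
    fun_prop
  have hcont : Continuous fun ξ : Idx r p → ℝ =>
      g ξ • ((fderiv ℝ (gprof c P) (ξ - E *ᵥ x)).comp
        (-(LinearMap.toContinuousLinearMap E.mulVecLin))) := by
    have h1 : Continuous (fderiv ℝ (gprof c P)) :=
      (gprof_contDiff c P).continuous_fderiv (by norm_num)
    have h2 : Continuous fun ξ : Idx r p → ℝ => ξ - E *ᵥ x := by fun_prop
    exact hg.smul ((h1.comp h2).clm_comp continuous_const)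
  have hint := hcont.integrable_of_hasCompactSupport (μ := volume) hgc.smul_right
  rw [pdx, (gavg_hasFDerivAt c P E hg hgc x).fderiv,
    ContinuousLinearMap.integral_apply hint]
  simp only [Matrix.mulVec, dotProduct, Matrix.transpose_apply] at hpc ⊢
  rw [gavg_sum c P E _ (fun l _ => hpc l) (fun l _ => hgc.mul_left)]
  unfold gavg
  congr 1
  ext ξ
  have := gprof_fderiv c P hP (ξ - E *ᵥ x) (E *ᵥ Pi.single j 1)
  simp only [_root_.smul_apply, ContinuousLinearMap.comp_apply,
    _root_.neg_apply, map_neg, LinearMap.coe_toContinuousLinearMap',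
    Matrix.mulVecLin_apply, smul_eq_mul]
  rw [this, Matrix.mulVec_single_one]
  simp only [dotProduct, Matrix.col_apply, neg_neg, Matrix.mulVec]
  rw [Finset.mul_sum, Finset.mul_sum, Finset.mul_sum]
  exact Finset.sum_congr rfl fun i _ => by ring

theorem gavg_add_mul (c : ℝ) (P E : Matrix (Idx r p) (Idx r p) ℝ)
    {g h : (Idx r p → ℝ) → ℝ} (hg : Continuous g) (hgc : HasCompactSupport g)
    (hh : Continuous h) (hhc : HasCompactSupport h) (k : ℝ) (x : Idx r p → ℝ) :
    gavg c P E g x + k * gavg c P E h x = gavg c P E (fun ξ => g ξ + k * h ξ) x := by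
  unfold gavg
  rw [← integral_const_mul, ← integral_add (gavg_integrable c P E hg hgc x)
    ((gavg_integrable c P E hh hhc x).const_mul k)]
  congr 1
  ext ξ
  ring

/-! ### Action of the operators `M_i` and `W_i` on Gaussian averages -/

/-- `M_i - κ` acting on a Gaussian average amounts to multiplying the averaged function by
`ξ_i - κ`. With `∇u = Eᵀ V` from `pdx_gavg`, where `E = e^{τB}`, one has `E M̄ Eᵀ = C`, so that
`e^{τB} M̄ ∇u = C V`, and `C P = 1` turns this into the average of `(ξ - Ex)_i g`. If `c = 0`, both
sides vanish. -/
theorem MopShift_gavg (c : ℝ) (P B A : Matrix (Idx r p) (Idx r p) ℝ) (τ : ℝ) (hP : Pᵀ = P)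
    (hCP : c ≠ 0 → covMat B A τ * P = 1) (κ : ℝ) (i : Idx r p)
    {g : (Idx r p → ℝ) → ℝ} (hg : Continuous g) (hgc : HasCompactSupport g) :
    MopShift B A τ κ i (gavg c P (mexp (τ • B)) g) =
      gavg c P (mexp (τ • B)) fun ξ => (ξ i - κ) * g ξ := by
  ext x
  by_cases hc : c = 0
  · subst hc
    have h0 : ∀ h : (Idx r p → ℝ) → ℝ, gavg 0 P (mexp (τ • B)) h = fun _ => 0 := by
      intro h
      ext y
      simp [gavg, gprof]
    rw [h0, h0]
    simp [MopShift, Mop, pdx, Matrix.mulVec, dotProduct]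
  replace hCP := hCP hc
  set E := mexp (τ • B) with hE
  have hEi : E * mexp (-(τ • B)) = 1 := mul_eq_one_comm.1 (mexp_neg_mul _)
  have hEM : E * Mbar B A τ * Eᵀ = covMat B A τ := by
    have h2 : (mexp (-(τ • B)))ᵀ * Eᵀ = 1 := by
      rw [← Matrix.transpose_mul, hEi, Matrix.transpose_one]
    calc E * Mbar B A τ * Eᵀ
        = (E * mexp (-(τ • B))) * covMat B A τ * ((mexp (-(τ • B)))ᵀ * Eᵀ) := by
          simp only [Mbar, Matrix.mul_assoc]
      _ = covMat B A τ := by rw [hEi, h2, Matrix.one_mul, Matrix.mul_one]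
  have hzc : Continuous fun ξ : Idx r p → ℝ => P *ᵥ (ξ - E *ᵥ x) := by fun_prop
  have hpc : ∀ l, Continuous fun ξ : Idx r p → ℝ => (P *ᵥ (ξ - E *ᵥ x)) l * g ξ := by
    intro l
    fun_prop
  have key : ((E * Mbar B A τ) *ᵥ fun j => pdx j (gavg c P E g) x) i =
      gavg c P E (fun ξ => (ξ - E *ᵥ x) i * g ξ) x := by
    rw [pdx_gavg c P E hP hg hgc, Matrix.mulVec_mulVec, hEM, Matrix.mulVec, dotProduct,
      gavg_sum c P E _ (fun l _ => hpc l) (fun l _ => hgc.mul_left)]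
    congr 1
    ext ξ
    simp_rw [← mul_assoc]
    rw [← Finset.sum_mul]
    congr 1
    change (covMat B A τ *ᵥ (P *ᵥ (ξ - E *ᵥ x))) i = _
    rw [Matrix.mulVec_mulVec, hCP, Matrix.one_mulVec]
  have hzi : Continuous fun ξ : Idx r p → ℝ => (ξ - E *ᵥ x) i * g ξ := by
    have : Continuous fun ξ : Idx r p → ℝ => ξ - E *ᵥ x := by fun_prop
    fun_prop
  rw [MopShift, Mop, key]
  have := gavg_add_mul c P E hzi hgc.mul_left hg hgc ((E *ᵥ x) i - κ) x
  calc _ = _ := by ring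
    _ = _ := this
    _ = _ := by
      congr 1
      ext ξ
      simp only [Pi.sub_apply]
      ring

theorem MopShift_iterate_gavg (c : ℝ) (P B A : Matrix (Idx r p) (Idx r p) ℝ) (τ : ℝ)
    (hP : Pᵀ = P) (hCP : c ≠ 0 → covMat B A τ * P = 1) (κ : ℝ) (i : Idx r p) (m : ℕ)
    {g : (Idx r p → ℝ) → ℝ} (hg : Continuous g) (hgc : HasCompactSupport g) :
    (MopShift B A τ κ i)^[m] (gavg c P (mexp (τ • B)) g) =
      gavg c P (mexp (τ • B)) fun ξ => (ξ i - κ) ^ m * g ξ := by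
  induction m with
  | zero => simp
  | succ m ih =>
    rw [Function.iterate_succ_apply', ih,
      MopShift_gavg c P B A τ hP hCP κ i (g := fun ξ => (ξ i - κ) ^ m * g ξ) (by fun_prop)
        hgc.mul_left]
    congr 1
    ext ξ
    ring

theorem MshiftPow_gavg (c : ℝ) (P B A : Matrix (Idx r p) (Idx r p) ℝ) (τ : ℝ)
    (hP : Pᵀ = P) (hCP : c ≠ 0 → covMat B A τ * P = 1) (κ : Idx r p → ℝ) (β : Idx r p → ℕ)
    {g : (Idx r p → ℝ) → ℝ} (hg : Continuous g) (hgc : HasCompactSupport g) :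
    MshiftPow B A τ κ β (gavg c P (mexp (τ • B)) g) =
      gavg c P (mexp (τ • B)) fun ξ => (∏ j, (ξ j - κ j) ^ β j) * g ξ := by
  have main : ∀ l : List (Idx r p),
      l.foldr (fun i g => (MopShift B A τ (κ i) i)^[β i] g) (gavg c P (mexp (τ • B)) g) =
        gavg c P (mexp (τ • B)) fun ξ => (l.map fun j => (ξ j - κ j) ^ β j).prod * g ξ := by
    intro l
    induction l with
    | nil => simp
    | cons i l ih =>
      have hl : Continuous fun ξ : Idx r p → ℝ => (l.map fun j => (ξ j - κ j) ^ β j).prod :=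
        continuous_list_prod l fun j _ => by fun_prop
      rw [List.foldr_cons, ih,
        MopShift_iterate_gavg c P B A τ hP hCP (κ i) i (β i)
          (g := fun ξ => (l.map fun j => (ξ j - κ j) ^ β j).prod * g ξ) (hl.mul hg) hgc.mul_left]
      simp only [List.map_cons, List.prod_cons, mul_assoc]
  rw [MshiftPow, main]
  simp only [Finset.prod_map_toList]

theorem hasCompactSupport_sum_mul {ι : Type*} (S : Finset ι) {g : ι → (Idx r p → ℝ) → ℝ}
    (hgc : ∀ i ∈ S, HasCompactSupport (g i)) (k : ι → ℝ) :
    HasCompactSupport fun ξ => ∑ i ∈ S, k i * g i ξ := by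
  classical
  induction S using Finset.induction_on with
  | empty =>
    simp only [Finset.sum_empty]
    exact HasCompactSupport.zero
  | insert i S hi ih =>
    simp only [Finset.sum_insert hi]
    exact (HasCompactSupport.mul_left (hgc i (by simp))).add
      (ih fun j hj => hgc j (by simp [hj]))

theorem Tpoly_continuous (B : Matrix (Idx r p) (Idx r p) ℝ) (a : ℝ → (Idx r p → ℝ) → ℝ)
    (tb : ℝ) (xb : Idx r p → ℝ) (n : ℤ) (s : ℝ) : Continuous (Tpoly B a tb xb n s) := by
  unfold Tpoly
  refine continuous_finsetSum _ fun k _ => continuous_finsetSum _ fun β _ => ?_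
  split_ifs <;> fun_prop

/-- Substituting the operators `M_i` into a Taylor polynomial and applying the result to a Gaussian
average amounts to multiplying the averaged function by that polynomial. -/
theorem TpolyOp_gavg (c : ℝ) (P B A : Matrix (Idx r p) (Idx r p) ℝ) (τ : ℝ)
    (hP : Pᵀ = P) (hCP : c ≠ 0 → covMat B A τ * P = 1) (a : ℝ → (Idx r p → ℝ) → ℝ)
    (tb : ℝ) (xb : Idx r p → ℝ) (n : ℤ) (s : ℝ)
    {g : (Idx r p → ℝ) → ℝ} (hg : Continuous g) (hgc : HasCompactSupport g)
    (x : Idx r p → ℝ) :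
    TpolyOp B A a tb xb n s τ (gavg c P (mexp (τ • B)) g) x =
      gavg c P (mexp (τ • B)) (fun ξ => Tpoly B a tb xb n s ξ * g ξ) x := by
  set S : Finset (ℕ × (Idx r p → ℕ)) := Finset.range (n.toNat + 1) ×ˢ
    Fintype.piFinset (fun _ : Idx r p => Finset.range (n.toNat + 1)) with hS
  let co : ℕ × (Idx r p → ℕ) → ℝ := fun q =>
    if 2 * (q.1 : ℤ) + (bwt q.2 : ℤ) ≤ n then
      ((q.1.factorial * mfact q.2 : ℕ) : ℝ)⁻¹ * YDx B q.1 q.2 a tb xb * (s - tb) ^ q.1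
    else 0
  have e1 : TpolyOp B A a tb xb n s τ (gavg c P (mexp (τ • B)) g) x =
      ∑ q ∈ S, co q * gavg c P (mexp (τ • B))
        (fun ξ => (∏ j, (ξ j - (mexp ((s - tb) • B) *ᵥ xb) j) ^ q.2 j) * g ξ) x := by
    rw [hS, Finset.sum_product]
    refine Finset.sum_congr rfl fun k _ => Finset.sum_congr rfl fun β _ => ?_
    rw [MshiftPow_gavg c P B A τ hP hCP _ _ hg hgc]
    simp only [co, ite_mul, zero_mul]
  have e2 : ∀ ξ, Tpoly B a tb xb n s ξ * g ξ =
      ∑ q ∈ S, co q * ((∏ j, (ξ j - (mexp ((s - tb) • B) *ᵥ xb) j) ^ q.2 j) * g ξ) := by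
    intro ξ
    rw [hS, Finset.sum_product, Tpoly, Finset.sum_mul]
    refine Finset.sum_congr rfl fun k _ => ?_
    rw [Finset.sum_mul]
    refine Finset.sum_congr rfl fun β _ => ?_
    simp only [co, ite_mul, zero_mul, mul_assoc]
  simp_rw [e2]
  rw [e1, gavg_sum c P _ S (g := fun q ξ =>
    (∏ j, (ξ j - (mexp ((s - tb) • B) *ᵥ xb) j) ^ q.2 j) * g ξ)
    (fun q _ => by fun_prop) (fun q _ => hgc.mul_left)]

/-- `W_i` acting on a Gaussian average differentiates the averaged function, by integration by
parts in `ξ` and `e^{-τBᵀ} ∇u = V`, with `V` as in `pdx_gavg`. -/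
theorem Wop_gavg (c : ℝ) (P B : Matrix (Idx r p) (Idx r p) ℝ) (τ : ℝ) (hP : Pᵀ = P)
    (i : Idx r p) {g : (Idx r p → ℝ) → ℝ} (hg : ContDiff ℝ 1 g) (hgc : HasCompactSupport g) :
    Wop B τ i (gavg c P (mexp (τ • B)) g) = gavg c P (mexp (τ • B)) (pdx i g) := by
  ext x
  set E := mexp (τ • B) with hE
  have h1 : mexp (-(τ • Bᵀ)) * Eᵀ = 1 := by
    rw [hE, ← mexp_transpose, Matrix.transpose_smul, mexp_neg_mul]
  rw [Wop, pdx_gavg c P E hP hg.continuous hgc, Matrix.mulVec_mulVec, h1, Matrix.one_mulVec]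
  have hd : ∀ ξ : Idx r p → ℝ, fderiv ℝ (fun ξ => gprof c P (ξ - E *ᵥ x)) ξ (Pi.single i 1) =
      -(gprof c P (ξ - E *ᵥ x) * (P *ᵥ (ξ - E *ᵥ x)) i) := by
    intro ξ
    rw [fderiv_comp_sub, gprof_fderiv c P hP, dotProduct_single_one]
  have hgd : Continuous fun ξ => fderiv ℝ g ξ (Pi.single i 1) :=
    (hg.continuous_fderiv (by norm_num)).clm_apply continuous_const
  have hgdc : HasCompactSupport fun ξ => fderiv ℝ g ξ (Pi.single i 1) :=
    hgc.fderiv_apply ℝ _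
  have hpc : Continuous fun ξ : Idx r p → ℝ => (P *ᵥ (ξ - E *ᵥ x)) i * g ξ := by
    have h2 : Continuous fun ξ : Idx r p → ℝ => P *ᵥ (ξ - E *ᵥ x) := by fun_prop
    have h3 := hg.continuous
    fun_prop
  have hint := (gavg_integrable c P E hpc hgc.mul_left x).neg
  unfold gavg pdx
  rw [integral_mul_fderiv_eq_neg_fderiv_mul_of_integrable]
  · simp_rw [hd]
    rw [← integral_neg]
    congr 1
    ext ξ
    ring
  · simp_rw [hd]
    refine hint.congr (Filter.Eventually.of_forall fun ξ => ?_)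
    simp only [Pi.neg_apply]
    ring
  · exact gavg_integrable c P E hgd hgdc x
  · exact gavg_integrable c P E hg.continuous hgc x
  · exact fun ξ _ => ((gprof_contDiff c P).differentiable (by norm_num) _).comp ξ (by fun_prop)
  · exact fun ξ _ => hg.differentiable (by norm_num) ξ

theorem pdx_contDiff (i : Idx r p) {g : (Idx r p → ℝ) → ℝ} {m n : WithTop ℕ∞}
    (hg : ContDiff ℝ n g) (hmn : m + 1 ≤ n) : ContDiff ℝ m (pdx i g) :=
  (hg.fderiv_right hmn).clm_apply contDiff_const

theorem pdx_hasCompactSupport (i : Idx r p) {g : (Idx r p → ℝ) → ℝ}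
    (hgc : HasCompactSupport g) : HasCompactSupport (pdx i g) :=
  hgc.fderiv_apply ℝ _

/-! ### The intertwining identity -/

/-- For every `1 ≤ n ≤ N`, every `f ∈ C²_c(ℝ^d)`, all `t < s` and `x`:
`∫ Γ₀^{(z̄)}(t,x;s,ξ) ((K_n - K_{n-1})f)(s,ξ) dξ = G_n(t,s,x) ∫ Γ₀^{(z̄)}(t,x;s,ξ) f(ξ) dξ`. -/
theorem Kdiff_integral_eq_Gop {r : ℕ} {p : Fin (r + 1) → ℕ}
    (B : Matrix (Idx r p) (Idx r p) ℝ) (hB : IsKolB B)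
    (a : Idx r p → Idx r p → ℝ → (Idx r p → ℝ) → ℝ)
    (aD : Idx r p → ℝ → (Idx r p → ℝ) → ℝ)
    (hsym : ∀ i j, a i j = a j i)
    (hsmooth : ∀ i j, ContDiff ℝ (⊤ : ℕ∞) (Function.uncurry (a i j)))
    (hsmoothD : ∀ i, ContDiff ℝ (⊤ : ℕ∞) (Function.uncurry (aD i)))
    (tb : ℝ) (xb : Idx r p → ℝ)
    (hpos : ∀ ξ : Idx r p → ℝ, suppG0 ξ → ξ ≠ 0 → 0 < ξ ⬝ᵥ (AzMat a tb xb) *ᵥ ξ)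
    (N n : ℕ) (hn1 : 1 ≤ n) (hnN : n ≤ N)
    (f : (Idx r p → ℝ) → ℝ) (hf : ContDiff ℝ 2 f) (hfc : HasCompactSupport f)
    (t s : ℝ) (hts : t < s) (x : Idx r p → ℝ) :
    ∫ ξ : Idx r p → ℝ, gauss B (AzMat a tb xb) t x s ξ *
        Kdiff B a aD tb xb (n : ℤ) f s ξ
      = Gop B (AzMat a tb xb) a aD tb xb (n : ℤ) t s
          (fun x' => ∫ ξ : Idx r p → ℝ, gauss B (AzMat a tb xb) t x' s ξ * f ξ) x := by
  set A := AzMat a tb xb with hAdef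
  set C := covMat B A (s - t) with hC
  set c : ℝ := (2 * Real.pi) ^ (-(Fintype.card (Idx r p) : ℝ) / 2) *
    |C.det| ^ (-(1:ℝ) / 2) with hc
  have hA : Aᵀ = A := by
    ext i j
    simp only [hAdef, AzMat, Matrix.transpose_apply, Matrix.of_apply, hsym i j, and_comm]
  have hP : (C⁻¹)ᵀ = C⁻¹ := by
    rw [Matrix.transpose_nonsing_inv, hC, covMat_symm B A hA]
  -- For singular `C` the real power `0 ^ (-1/2)` is `0`, so `c = 0` and the kernel vanishes.
  have hCP : c ≠ 0 → covMat B A (s - t) * C⁻¹ = 1 := by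
    intro hne
    refine Matrix.mul_nonsing_inv C (isUnit_iff_ne_zero.2 fun h0 => hne ?_)
    rw [hc, h0, abs_zero, Real.zero_rpow (by norm_num), mul_zero]
  have h1 : ∀ i, ContDiff ℝ 1 (pdx i f) := fun i => pdx_contDiff i hf (by norm_num)
  have h1c : ∀ i, HasCompactSupport (pdx i f) := fun i => pdx_hasCompactSupport i hfc
  have h2 : ∀ i j, Continuous (pdx i (pdx j f)) := fun i j =>
    (pdx_contDiff (m := 0) i (h1 j) (by norm_num)).continuous
  have h2c : ∀ i j, HasCompactSupport (pdx i (pdx j f)) := fun i j =>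
    pdx_hasCompactSupport i (h1c j)
  have hT : ∀ (b : ℝ → (Idx r p → ℝ) → ℝ) (m : ℤ), Continuous (Tpoly B b tb xb m s) :=
    fun b m => Tpoly_continuous B b tb xb m s
  have hsub : ∀ (b : ℝ → (Idx r p → ℝ) → ℝ) (m m' : ℤ) (g : (Idx r p → ℝ) → ℝ),
      Continuous g → HasCompactSupport g →
      TpolyOp B A b tb xb m s (s - t) (gavg c C⁻¹ (mexp ((s - t) • B)) g) x
        - TpolyOp B A b tb xb m' s (s - t) (gavg c C⁻¹ (mexp ((s - t) • B)) g) x =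
      gavg c C⁻¹ (mexp ((s - t) • B))
        (fun ξ => (Tpoly B b tb xb m s ξ - Tpoly B b tb xb m' s ξ) * g ξ) x := by
    intro b m m' g hg hgc
    rw [TpolyOp_gavg c C⁻¹ B A _ hP hCP b tb xb m s hg hgc,
      TpolyOp_gavg c C⁻¹ B A _ hP hCP b tb xb m' s hg hgc, sub_eq_add_neg, ← neg_one_mul,
      gavg_add_mul c C⁻¹ _ (g := fun ξ => Tpoly B b tb xb m s ξ * g ξ)
        (h := fun ξ => Tpoly B b tb xb m' s ξ * g ξ)
        ((hT b m).mul hg) hgc.mul_left ((hT b m').mul hg) hgc.mul_left]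
    congr 1
    ext ξ
    ring
  let Φ : Idx r p × Idx r p → (Idx r p → ℝ) → ℝ := fun q ξ =>
    (Tpoly B (a q.1 q.2) tb xb n s ξ - Tpoly B (a q.1 q.2) tb xb (n - 1) s ξ) *
      pdx q.1 (pdx q.2 f) ξ
  let Ψ : Idx r p → (Idx r p → ℝ) → ℝ := fun i ξ =>
    (Tpoly B (aD i) tb xb (n - 1) s ξ - Tpoly B (aD i) tb xb (n - 2) s ξ) * pdx i f ξ
  have hΦ : ∀ q ∈ G0set r p ×ˢ G0set r p, Continuous (Φ q) := fun q _ =>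
    ((hT _ _).sub (hT _ _)).mul (h2 q.1 q.2)
  have hΦc : ∀ q ∈ G0set r p ×ˢ G0set r p, HasCompactSupport (Φ q) := fun q _ =>
    (h2c q.1 q.2).mul_left
  have hΨ : ∀ i ∈ G0set r p, Continuous (Ψ i) := fun i _ =>
    ((hT _ _).sub (hT _ _)).mul (h1 i).continuous
  have hΨc : ∀ i ∈ G0set r p, HasCompactSupport (Ψ i) := fun i _ => (h1c i).mul_left
  have hone := fun i => Wop_gavg c C⁻¹ B (s - t) hP i (hf.of_le one_le_two) hfc
  have htwo := fun i j => Wop_gavg c C⁻¹ B (s - t) hP i (h1 j) (h1c j)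
  have hK : Kdiff B a aD tb xb n f s = fun ξ => (∑ i ∈ G0set r p, 1 * Ψ i ξ) +
      (1/2) * ∑ q ∈ G0set r p ×ˢ G0set r p, 1 * Φ q ξ := by
    ext ξ
    simp only [Kdiff, Φ, Ψ, one_mul, Finset.sum_product]
    rw [add_comm]
  have hR : Gop B A a aD tb xb n t s (gavg c C⁻¹ (mexp ((s - t) • B)) f) x =
      (∑ i ∈ G0set r p, 1 * gavg c C⁻¹ (mexp ((s - t) • B)) (Ψ i) x) +
      (1/2) * ∑ q ∈ G0set r p ×ˢ G0set r p,
        1 * gavg c C⁻¹ (mexp ((s - t) • B)) (Φ q) x := by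
    rw [Gop, Finset.sum_product, add_comm]
    congr 1
    · refine Finset.sum_congr rfl fun i _ => ?_
      rw [hone, one_mul]
      exact hsub (aD i) (n - 1) (n - 2) _ (h1 i).continuous (h1c i)
    · congr 1
      refine Finset.sum_congr rfl fun i _ => Finset.sum_congr rfl fun j _ => ?_
      rw [hone, htwo, one_mul]
      exact hsub (a i j) n (n - 1) _ (h2 i j) (h2c i j)
  have hsumc : ∀ {ι : Type} (S : Finset ι) (F : ι → (Idx r p → ℝ) → ℝ),
      (∀ i ∈ S, Continuous (F i)) → Continuous fun ξ => ∑ i ∈ S, 1 * F i ξ :=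
    fun S F hF => continuous_finsetSum _ fun i hi => continuous_const.mul (hF i hi)
  calc ∫ ξ : Idx r p → ℝ, gauss B A t x s ξ * Kdiff B a aD tb xb n f s ξ
      = gavg c C⁻¹ (mexp ((s - t) • B)) (Kdiff B a aD tb xb n f s) x := rfl
    _ = Gop B A a aD tb xb n t s (gavg c C⁻¹ (mexp ((s - t) • B)) f) x := by
      rw [hK, hR, gavg_sum c C⁻¹ _ _ hΨ hΨc, gavg_sum c C⁻¹ _ _ hΦ hΦc,
        gavg_add_mul c C⁻¹ _ (hsumc _ _ hΨ) (hasCompactSupport_sum_mul _ hΨc _)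
          (hsumc _ _ hΦ) (hasCompactSupport_sum_mul _ hΦc _)]

end
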